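/- Let k be a natural number, let λ : ℤ → (0, ∞) satisfy λ(-n) = λ(n) for all n and lim_{|n|→∞} |n|^j λ(n) = 0 for every natural number j, and for n ∈ ℤ let ê_n : ℝ → ℝ be defined by ê_n(θ) = λ(n) cos(nθ) for n ≥ 0 and ê_n(θ) = λ(n) sin(nθ) for n < 0. Then for every R > 0 there exists a constant C_R > 0 such that for all C^k functions f, g : ℝ → ℝ that are 2π-periodic with ‖f‖_{H^k} ≤ R and ‖g‖_{H^k} ≤ R, one has ∑_{n ∈ ℤ} ‖ê_n ∘ (id + f) − ê_n ∘ (id + g)‖_{H^k}² ≤ C_R² · ‖f − g‖_{H^k}², where ‖h‖_{H^k}² = ∫₀^{2π} h(θ)² dθ + ∫₀^{2π} (h^{(k)}(θ))² dθ. -/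

import Mathlib

/-!
Up to the factor `λ(n)` and a phase, each basis function is `θ ↦ cos (n θ + c)`. Writing
`F = n (id + f)` and `G = n (id + g)`, it is enough to bound the `H^k` norm of
`cos (F + c) - cos (G + c)` by that of `f - g`, with a constant growing polynomially in `n`: the
rapid decay of `λ` then makes the squared bounds summable.

Since `(cos (F + c))' = cos (F + c + π/2) F'`, the Leibniz rule expresses the derivative of order
`j + 1` of the difference through derivatives of order at most `j` of differences of the same type.
By induction (`abs_iteratedDeriv_cos_sub_top_le`) the derivative of order `k` is bounded pointwise
by `δ` times a polynomial in `M`, plus `δ |F^{(k)}| + |(F - G)^{(k)}|`, where `M` bounds the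
derivatives of `F` and `G` of orders `1, …, k - 1`, and `δ` those of `F - G` of orders
`0, …, k - 1`. The top derivatives enter only linearly, so they may be integrated in `L²`.

For `k ≥ 1` the numbers `M` and `δ` are controlled by the `H^k` norms through the Sobolev
inequality on the circle (`exists_sobolev`): by Rolle every derivative of positive order below `k`
of a periodic function has a zero, hence is bounded by the integral of the next one, and the
function itself by its mean plus its oscillation. For `k = 0` the Lipschitz bound for `cos` is
enough.
-/

/-- The squared `H^k` norm of a (`2π`-periodic) function:
`‖h‖²_{H^k} = ∫₀^{2π} h² + ∫₀^{2π} (h^{(k)})²`. -/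
noncomputable def HkNormSq (k : ℕ) (h : ℝ → ℝ) : ℝ :=
  (∫ θ in (0:ℝ)..(2 * Real.pi), (h θ) ^ 2) +
    ∫ θ in (0:ℝ)..(2 * Real.pi), (iteratedDeriv k h θ) ^ 2

/-- The basis functions of `H_λ`: `ê_n(θ) = λ(n)cos(nθ)` for `n ≥ 0`,
`ê_n(θ) = λ(n)sin(nθ)` for `n < 0`. -/
noncomputable def eBasis (lam : ℤ → ℝ) (n : ℤ) (θ : ℝ) : ℝ :=
  if 0 ≤ n then lam n * Real.cos (n * θ) else lam n * Real.sin (n * θ)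

open MeasureTheory intervalIntegral

/-! ### Pointwise bounds for derivatives of `cos (F + c)` -/

lemma deriv_cos_add {F : ℝ → ℝ} (hF : Differentiable ℝ F) (c : ℝ) :
    deriv (fun x => Real.cos (F x + c)) =
      (fun x => Real.cos (F x + (c + Real.pi / 2))) * deriv F := by
  funext x
  have h := ((hF x).hasDerivAt.add_const c).cos
  rw [h.deriv, Pi.mul_apply, ← add_assoc, Real.cos_add_pi_div_two]

lemma contDiff_cos_add {n : ℕ} {F : ℝ → ℝ} (hF : ContDiff ℝ n F) (c : ℝ) :
    ContDiff ℝ n (fun x => Real.cos (F x + c)) :=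
  Real.contDiff_cos.comp (hF.add contDiff_const)

lemma contDiff_deriv {j : ℕ} {F : ℝ → ℝ} (hF : ContDiff ℝ ((j + 1 : ℕ) : WithTop ℕ∞) F) :
    ContDiff ℝ j (deriv F) := by
  have h : ContDiff ℝ ((j : WithTop ℕ∞) + 1) F := by exact_mod_cast hF
  exact (contDiff_succ_iff_deriv.1 h).2.2

/-- Leibniz expansion of a derivative of `cos (F + c)`; only derivatives of `F` of order between
`1` and `j + 1` and derivatives of order at most `j` of a phase-shifted cosine occur. -/
lemma iteratedDeriv_succ_cos {j : ℕ} {F : ℝ → ℝ}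
    (hF : ContDiff ℝ ((j + 1 : ℕ) : WithTop ℕ∞) F) (c x : ℝ) :
    iteratedDeriv (j + 1) (fun x => Real.cos (F x + c)) x =
      ∑ i ∈ Finset.range (j + 1), (j.choose i : ℝ) *
        iteratedDeriv i (fun x => Real.cos (F x + (c + Real.pi / 2))) x *
          iteratedDeriv (j - i + 1) F x := by
  have hd : Differentiable ℝ F := hF.differentiable (by simp)
  rw [iteratedDeriv_succ', deriv_cos_add hd, iteratedDeriv_mul]
  · simp only [iteratedDeriv_succ']
  · exact (contDiff_cos_add (hF.of_le (by exact_mod_cast j.le_succ)) _).contDiffAt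
  · exact (contDiff_deriv hF).contDiffAt

lemma sum_choose_mul (j : ℕ) (B : ℝ) :
    ∑ i ∈ Finset.range (j + 1), (j.choose i : ℝ) * B = 2 ^ j * B := by
  rw [← Finset.sum_mul]
  congr 1
  exact_mod_cast Nat.sum_range_choose j

/-- If `|F^{(i)}(x)| ≤ M` for `1 ≤ i ≤ j`, then `|(cos (F + c))^{(j)}(x)| ≤ 2^{j²} M^j`. -/
lemma abs_iteratedDeriv_cos_le (j : ℕ) : ∀ {F : ℝ → ℝ} (_ : ContDiff ℝ j F) (c x M : ℝ),
    1 ≤ M → (∀ i, 1 ≤ i → i ≤ j → |iteratedDeriv i F x| ≤ M) →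
    |iteratedDeriv j (fun x => Real.cos (F x + c)) x| ≤ 2 ^ (j * j) * M ^ j := by
  induction j using Nat.strong_induction_on with
  | _ j ih =>
    intro F hF c x M hM hb
    rcases j with _ | j
    · simpa using Real.abs_cos_le_one _
    have hM0 : 0 ≤ M := by linarith
    rw [iteratedDeriv_succ_cos hF]
    calc _ ≤ ∑ i ∈ Finset.range (j + 1), (j.choose i : ℝ) * (2 ^ (j * j) * M ^ j * M) := by
          refine (Finset.abs_sum_le_sum_abs _ _).trans (Finset.sum_le_sum fun i hi => ?_)
          have hij : i ≤ j := Nat.lt_succ_iff.1 (Finset.mem_range.1 hi)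
          rw [abs_mul, abs_mul, Nat.abs_cast, mul_assoc]
          have h1 := ih i (by lia) (hF.of_le (by exact_mod_cast (by lia : i ≤ j + 1)))
            (c + Real.pi / 2) x M hM (fun l h1 h2 => hb l h1 (by lia))
          have h2 := hb (j - i + 1) (by lia) (by lia)
          have h3 : (2 : ℝ) ^ (i * i) * M ^ i ≤ 2 ^ (j * j) * M ^ j := by
            gcongr; norm_num
          gcongr
          exact h1.trans h3
      _ = 2 ^ (j + j * j) * M ^ (j + 1) := by rw [sum_choose_mul]; ring
      _ ≤ _ := by
          gcongr
          · norm_num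
          · nlinarith

/-- The Leibniz expansion of the derivatives of `cos (F + c) - cos (G + c)`, from
`(cos (F + c) - cos (G + c))' = (cos (F + c') - cos (G + c')) F' + cos (G + c') (F - G)'`
with `c' = c + π / 2`. -/
lemma iteratedDeriv_succ_cos_sub {j : ℕ} {F G : ℝ → ℝ}
    (hF : ContDiff ℝ ((j + 1 : ℕ) : WithTop ℕ∞) F)
    (hG : ContDiff ℝ ((j + 1 : ℕ) : WithTop ℕ∞) G) (c x : ℝ) :
    iteratedDeriv (j + 1) (fun x => Real.cos (F x + c) - Real.cos (G x + c)) x =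
      ∑ i ∈ Finset.range (j + 1), (j.choose i : ℝ) *
        (iteratedDeriv i (fun x => Real.cos (F x + (c + Real.pi / 2)) -
            Real.cos (G x + (c + Real.pi / 2))) x * iteratedDeriv (j - i + 1) F x +
          iteratedDeriv i (fun x => Real.cos (G x + (c + Real.pi / 2))) x *
            iteratedDeriv (j - i + 1) (fun x => F x - G x) x) := by
  rw [iteratedDeriv_fun_sub (contDiff_cos_add hF c).contDiffAt (contDiff_cos_add hG c).contDiffAt,
    iteratedDeriv_succ_cos hF, iteratedDeriv_succ_cos hG, ← Finset.sum_sub_distrib]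
  refine Finset.sum_congr rfl fun i hi => ?_
  have hij : i ≤ j := Nat.lt_succ_iff.1 (Finset.mem_range.1 hi)
  have e1 : ((i : ℕ) : WithTop ℕ∞) ≤ ((j + 1 : ℕ) : WithTop ℕ∞) := by
    exact_mod_cast (by lia : i ≤ j + 1)
  have e2 : ((j - i + 1 : ℕ) : WithTop ℕ∞) ≤ ((j + 1 : ℕ) : WithTop ℕ∞) := by
    exact_mod_cast (by lia : j - i + 1 ≤ j + 1)
  rw [iteratedDeriv_fun_sub (contDiff_cos_add (hF.of_le e1) _).contDiffAt
      (contDiff_cos_add (hG.of_le e1) _).contDiffAt,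
    iteratedDeriv_fun_sub (hF.of_le e2).contDiffAt (hG.of_le e2).contDiffAt]
  ring

/-- The Lipschitz counterpart of `abs_iteratedDeriv_cos_le`: the same bound times `δ` when the
derivatives of `F - G` of order at most `j` are bounded by `δ` at `x`. -/
lemma abs_iteratedDeriv_cos_sub_le (j : ℕ) : ∀ {F G : ℝ → ℝ} (_ : ContDiff ℝ j F)
    (_ : ContDiff ℝ j G) (c x M δ : ℝ), 1 ≤ M →
    (∀ i, 1 ≤ i → i ≤ j → |iteratedDeriv i F x| ≤ M) →
    (∀ i, 1 ≤ i → i ≤ j → |iteratedDeriv i G x| ≤ M) →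
    (∀ i, i ≤ j → |iteratedDeriv i (fun x => F x - G x) x| ≤ δ) →
    |iteratedDeriv j (fun x => Real.cos (F x + c) - Real.cos (G x + c)) x| ≤
      2 ^ (j * j) * M ^ j * δ := by
  induction j using Nat.strong_induction_on with
  | _ j ih =>
    intro F G hF hG c x M δ hM hbF hbG hbH
    have hM0 : 0 ≤ M := by linarith
    have hδ : 0 ≤ δ := (abs_nonneg _).trans (hbH 0 (by lia))
    rcases j with _ | j
    · have := Real.abs_cos_sub_cos_le (F x + c) (G x + c)
      have h0 := hbH 0 le_rfl
      simp only [iteratedDeriv_zero, add_sub_add_right_eq_sub] at *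
      simpa using this.trans h0
    rw [iteratedDeriv_succ_cos_sub hF hG]
    calc _ ≤ ∑ i ∈ Finset.range (j + 1), (j.choose i : ℝ) *
            (2 * (2 ^ (j * j) * M ^ j * δ * M)) := by
          refine (Finset.abs_sum_le_sum_abs _ _).trans (Finset.sum_le_sum fun i hi => ?_)
          have hij : i ≤ j := Nat.lt_succ_iff.1 (Finset.mem_range.1 hi)
          have e1 : ((i : ℕ) : WithTop ℕ∞) ≤ ((j + 1 : ℕ) : WithTop ℕ∞) := by
            exact_mod_cast (by lia : i ≤ j + 1)
          rw [abs_mul, Nat.abs_cast]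
          gcongr
          refine (abs_add_le _ _).trans ?_
          rw [abs_mul, abs_mul]
          have h1 := ih i (by lia) (hF.of_le e1) (hG.of_le e1)
            (c + Real.pi / 2) x M δ hM (fun l h1 h2 => hbF l h1 (by lia))
            (fun l h1 h2 => hbG l h1 (by lia)) (fun l h2 => hbH l (by lia))
          have h1' := abs_iteratedDeriv_cos_le i (hG.of_le e1)
            (c + Real.pi / 2) x M hM (fun l h1 h2 => hbG l h1 (by lia))
          have h2 := hbF (j - i + 1) (by lia) (by lia)
          have h2' := hbH (j - i + 1) (by lia)
          have h3 : (2 : ℝ) ^ (i * i) * M ^ i ≤ 2 ^ (j * j) * M ^ j := by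
            gcongr; norm_num
          have t1 := mul_le_mul (h1.trans (mul_le_mul_of_nonneg_right h3 hδ)) h2
            (abs_nonneg _) (by positivity)
          have t2 := mul_le_mul (h1'.trans h3) h2' (abs_nonneg _) (by positivity)
          have t3 : 2 ^ (j * j) * M ^ j * δ * 1 ≤ 2 ^ (j * j) * M ^ j * δ * M := by gcongr
          linarith
      _ = 2 ^ (j + 1 + j * j) * M ^ (j + 1) * δ := by rw [sum_choose_mul]; ring
      _ ≤ _ := by
          gcongr
          · norm_num
          · nlinarith

/-- Pointwise bound on the derivative of order `j + 1` of `cos (F + c) - cos (G + c)` when only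
the derivatives of order at most `j` are under uniform control: the derivatives of order `j + 1`
of `F` and `F - G` enter linearly. -/
lemma abs_iteratedDeriv_cos_sub_top_le (j : ℕ) {F G : ℝ → ℝ}
    (hF : ContDiff ℝ ((j + 1 : ℕ) : WithTop ℕ∞) F)
    (hG : ContDiff ℝ ((j + 1 : ℕ) : WithTop ℕ∞) G) (c x M δ : ℝ) (hM : 1 ≤ M)
    (hbF : ∀ i, 1 ≤ i → i ≤ j → |iteratedDeriv i F x| ≤ M)
    (hbG : ∀ i, 1 ≤ i → i ≤ j → |iteratedDeriv i G x| ≤ M)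
    (hbH : ∀ i, i ≤ j → |iteratedDeriv i (fun x => F x - G x) x| ≤ δ) :
    |iteratedDeriv (j + 1) (fun x => Real.cos (F x + c) - Real.cos (G x + c)) x| ≤
      2 ^ ((j + 1) * (j + 1)) * M ^ (j + 1) * δ + (δ * |iteratedDeriv (j + 1) F x| +
        |iteratedDeriv (j + 1) (fun x => F x - G x) x|) := by
  have hM0 : 0 ≤ M := by linarith
  have hδ : 0 ≤ δ := (abs_nonneg _).trans (hbH 0 (by lia))
  rw [iteratedDeriv_succ_cos_sub hF hG]
  -- The term `i = 0` carries the derivatives of order `j + 1`; all others are of lower order.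
  have key : ∀ i ∈ Finset.range (j + 1), |(j.choose i : ℝ) *
        (iteratedDeriv i (fun x => Real.cos (F x + (c + Real.pi / 2)) -
            Real.cos (G x + (c + Real.pi / 2))) x * iteratedDeriv (j - i + 1) F x +
          iteratedDeriv i (fun x => Real.cos (G x + (c + Real.pi / 2))) x *
            iteratedDeriv (j - i + 1) (fun x => F x - G x) x)| ≤
      (j.choose i : ℝ) * (2 * (2 ^ (j * j) * M ^ j * δ * M)) +
        if i = 0 then (δ * |iteratedDeriv (j + 1) F x| +
        |iteratedDeriv (j + 1) (fun x => F x - G x) x|) else 0 := by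
    intro i hi
    have hij : i ≤ j := Nat.lt_succ_iff.1 (Finset.mem_range.1 hi)
    have e1 : ((i : ℕ) : WithTop ℕ∞) ≤ ((j + 1 : ℕ) : WithTop ℕ∞) := by
      exact_mod_cast (by lia : i ≤ j + 1)
    rw [abs_mul, Nat.abs_cast]
    have hadd := abs_add_le
      (iteratedDeriv i (fun x => Real.cos (F x + (c + Real.pi / 2)) -
            Real.cos (G x + (c + Real.pi / 2))) x * iteratedDeriv (j - i + 1) F x)
      (iteratedDeriv i (fun x => Real.cos (G x + (c + Real.pi / 2))) x *
            iteratedDeriv (j - i + 1) (fun x => F x - G x) x)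
    rw [abs_mul, abs_mul] at hadd
    have h1 := abs_iteratedDeriv_cos_sub_le i (hF.of_le e1) (hG.of_le e1)
      (c + Real.pi / 2) x M δ hM (fun l h1 h2 => hbF l h1 (by lia))
      (fun l h1 h2 => hbG l h1 (by lia)) (fun l h2 => hbH l (by lia))
    have h1' := abs_iteratedDeriv_cos_le i (hG.of_le e1)
      (c + Real.pi / 2) x M hM (fun l h1 h2 => hbG l h1 (by lia))
    rcases Nat.eq_zero_or_pos i with rfl | hi0
    · simp only [Nat.choose_zero_right, Nat.cast_one, one_mul, if_true, Nat.sub_zero] at *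
      simp only [Nat.mul_zero, pow_zero, one_mul] at h1 h1'
      have t1 := mul_le_mul_of_nonneg_right h1 (abs_nonneg (iteratedDeriv (j + 1) F x))
      have t2 := mul_le_mul_of_nonneg_right h1'
        (abs_nonneg (iteratedDeriv (j + 1) (fun x => F x - G x) x))
      have t3 : 0 ≤ 2 * (2 ^ (j * j) * M ^ j * δ * M) := by positivity
      linarith
    · rw [if_neg (by lia), add_zero]
      gcongr
      have h2 := hbF (j - i + 1) (by lia) (by lia)
      have h2' := hbH (j - i + 1) (by lia)
      have h3 : (2 : ℝ) ^ (i * i) * M ^ i ≤ 2 ^ (j * j) * M ^ j := by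
        gcongr; norm_num
      have t1 := mul_le_mul (h1.trans (mul_le_mul_of_nonneg_right h3 hδ)) h2
        (abs_nonneg _) (by positivity)
      have t2 := mul_le_mul (h1'.trans h3) h2' (abs_nonneg _) (by positivity)
      have t3 : 2 ^ (j * j) * M ^ j * δ * 1 ≤ 2 ^ (j * j) * M ^ j * δ * M := by gcongr
      linarith
  refine (Finset.abs_sum_le_sum_abs _ _).trans ((Finset.sum_le_sum key).trans ?_)
  rw [Finset.sum_add_distrib, sum_choose_mul, Finset.sum_ite_eq' (Finset.range (j + 1)) 0,
    if_pos (by simp)]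
  refine add_le_add_left ?_ _
  calc _ = 2 ^ (j + 1 + j * j) * M ^ (j + 1) * δ := by ring
    _ ≤ _ := by
      gcongr
      · norm_num
      · nlinarith

/-! ### Sobolev inequality for periodic functions -/

lemma abs_sub_le_integral_abs_deriv {h : ℝ → ℝ} (hh : ContDiff ℝ 1 h) {x y : ℝ}
    (hx : x ∈ Set.Icc 0 (2 * Real.pi)) (hy : y ∈ Set.Icc 0 (2 * Real.pi)) :
    |h x - h y| ≤ ∫ t in (0:ℝ)..(2 * Real.pi), |deriv h t| := by
  have hc : Continuous (deriv h) := hh.continuous_deriv le_rfl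
  have hle : (0:ℝ) ≤ 2 * Real.pi := by positivity
  rw [← integral_deriv_eq_sub (fun t _ => hh.differentiable one_ne_zero t)
    (hc.intervalIntegrable y x)]
  rw [← Real.norm_eq_abs]
  refine (norm_integral_le_integral_norm_uIoc).trans ?_
  simp only [Real.norm_eq_abs]
  rw [integral_of_le hle]
  refine setIntegral_mono_set ?_ (Filter.Eventually.of_forall fun _ => abs_nonneg _) ?_
  · exact (hc.abs.integrableOn_Icc).mono_set Set.Ioc_subset_Icc_self
  · refine LE.le.eventuallyLE ?_
    rw [Set.uIoc]
    exact Set.Ioc_subset_Ioc (le_min hy.1 hx.1) (max_le hy.2 hx.2)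

/-- Oscillation of a periodic function is controlled by any higher derivative: by Rolle each
derivative of a periodic function vanishes somewhere, so its supremum is bounded by the integral
of the next derivative. -/
lemma abs_sub_le_integral_abs_iteratedDeriv (m : ℕ) : ∀ {h : ℝ → ℝ}
    (_ : ContDiff ℝ ((m + 1 : ℕ) : WithTop ℕ∞) h) (_ : ∀ x, h (x + 2 * Real.pi) = h x) {x y : ℝ}
    (_ : x ∈ Set.Icc 0 (2 * Real.pi)) (_ : y ∈ Set.Icc 0 (2 * Real.pi)),
    |h x - h y| ≤
      (2 * Real.pi) ^ m * ∫ t in (0:ℝ)..(2 * Real.pi), |iteratedDeriv (m + 1) h t| := by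
  have hle : (0:ℝ) ≤ 2 * Real.pi := by positivity
  induction m with
  | zero =>
    intro h hh _ x y hx hy
    simpa [iteratedDeriv_one] using abs_sub_le_integral_abs_deriv (by simpa using hh) hx hy
  | succ m ih =>
    intro h hh hp x y hx hy
    have hd := contDiff_deriv hh
    have hdp : ∀ x, deriv h (x + 2 * Real.pi) = deriv h x := fun x => by
      rw [← deriv_comp_add_const]; simp only [hp]
    obtain ⟨c, hc, hc0⟩ := exists_deriv_eq_zero (f := h) (a := 0) (b := 2 * Real.pi)
      (by positivity) hh.continuous.continuousOn (by simpa using (hp 0).symm)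
    have hb : ∀ t ∈ Set.Icc 0 (2 * Real.pi), |deriv h t| ≤
        (2 * Real.pi) ^ m * ∫ t in (0:ℝ)..(2 * Real.pi), |iteratedDeriv (m + 1 + 1) h t| := by
      intro t ht
      have := ih hd hdp ht (Set.Ioo_subset_Icc_self hc)
      rw [hc0, sub_zero] at this
      rwa [iteratedDeriv_succ' (n := m + 1)]
    refine (abs_sub_le_integral_abs_deriv
      (hh.of_le (by exact_mod_cast (by lia : 1 ≤ m + 1 + 1))) hx hy).trans ?_
    refine (integral_mono_on hle
      ((hd.continuous.abs).intervalIntegrable _ _) (intervalIntegrable_const) hb).trans ?_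
    rw [intervalIntegral.integral_const, smul_eq_mul, sub_zero]
    exact le_of_eq (by ring)

lemma sq_integral_abs_le {v : ℝ → ℝ} (hv : Continuous v) :
    (∫ t in (0:ℝ)..(2 * Real.pi), |v t|) ^ 2 ≤
      2 * Real.pi * ∫ t in (0:ℝ)..(2 * Real.pi), v t ^ 2 := by
  have hL : (0:ℝ) < 2 * Real.pi := by positivity
  set L := 2 * Real.pi
  set I := ∫ t in (0:ℝ)..L, |v t| with hI
  -- nonnegativity of the variance of `|v|`
  have h0 : 0 ≤ ∫ t in (0:ℝ)..L, (|v t| - I / L) ^ 2 :=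
    integral_nonneg hL.le fun t _ => sq_nonneg _
  have e : ∀ t, (|v t| - I / L) ^ 2 = v t ^ 2 - 2 * (I / L) * |v t| + (I / L) ^ 2 := by
    intro t; rw [← sq_abs (v t)]; ring
  simp only [e] at h0
  rw [intervalIntegral.integral_add, intervalIntegral.integral_sub, intervalIntegral.integral_const_mul,
    intervalIntegral.integral_const, ← hI, smul_eq_mul, sub_zero] at h0
  · have : L * ((∫ t in (0:ℝ)..L, v t ^ 2) - 2 * (I / L) * I + L * (I / L) ^ 2) =
        L * (∫ t in (0:ℝ)..L, v t ^ 2) - I ^ 2 := by field_simp; ring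
    nlinarith [mul_nonneg hL.le h0]
  all_goals exact (Continuous.intervalIntegrable (by fun_prop) _ _)

/-- Sobolev inequality on the circle: the derivatives of order less than `m + 1` are bounded
uniformly by the `H^{m+1}` norm. -/
lemma exists_sobolev (m : ℕ) : ∃ S : ℝ, 0 ≤ S ∧ ∀ h : ℝ → ℝ,
    ContDiff ℝ ((m + 1 : ℕ) : WithTop ℕ∞) h → (∀ x, h (x + 2 * Real.pi) = h x) →
    ∀ j ≤ m, ∀ x ∈ Set.Icc 0 (2 * Real.pi),
      (iteratedDeriv j h x) ^ 2 ≤ S * HkNormSq (m + 1) h := by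
  have hL : (1:ℝ) ≤ 2 * Real.pi := by linarith [Real.pi_gt_three]
  have hle : (0:ℝ) ≤ 2 * Real.pi := by positivity
  refine ⟨2 * (((2 * Real.pi) ^ m) ^ 2 * (2 * Real.pi)), by positivity, ?_⟩
  intro h hh hp j hj x hx
  have hk : Continuous (iteratedDeriv (m + 1) h) := hh.continuous_iteratedDeriv' _
  set Q := ∫ t in (0:ℝ)..(2 * Real.pi), |iteratedDeriv (m + 1) h t| with hQ
  set P := ∫ t in (0:ℝ)..(2 * Real.pi), |h t| with hP
  have hP0 : 0 ≤ P := integral_nonneg hle fun t _ => abs_nonneg _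
  have hQ0 : 0 ≤ Q := integral_nonneg hle fun t _ => abs_nonneg _
  have hPow : (1:ℝ) ≤ (2 * Real.pi) ^ m := one_le_pow₀ hL
  have main : |iteratedDeriv j h x| ≤ P + (2 * Real.pi) ^ m * Q := by
    rcases j with _ | j
    · rw [iteratedDeriv_zero]
      have hb : ∀ y ∈ Set.Icc 0 (2 * Real.pi), |h x| - (2 * Real.pi) ^ m * Q ≤ |h y| := by
        intro y hy
        have := abs_sub_le_integral_abs_iteratedDeriv m hh hp hx hy
        have := abs_sub_abs_le_abs_sub (h x) (h y)
        linarith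
      have := integral_mono_on (μ := volume) hle intervalIntegrable_const
        ((hh.continuous.abs).intervalIntegrable _ _) hb
      rw [intervalIntegral.integral_const, smul_eq_mul, sub_zero, ← hP] at this
      by_contra! hcon
      nlinarith
    · have hcd : ContDiff ℝ ((m - (j + 1) + 1 : ℕ) : WithTop ℕ∞) (iteratedDeriv (j + 1) h) := by
        rw [iteratedDeriv_eq_iterate]
        refine ContDiff.iterate_deriv' _ (j + 1) ?_
        rwa [show m - (j + 1) + 1 + (j + 1) = m + 1 by lia]
      have hper : ∀ i x, iteratedDeriv i h (x + 2 * Real.pi) = iteratedDeriv i h x := by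
        intro i x
        have := congrFun (iteratedDeriv_comp_add_const i h (2 * Real.pi)) x
        simp only [hp] at this
        exact this.symm
      obtain ⟨c, hc, hc0⟩ := exists_deriv_eq_zero (f := iteratedDeriv j h) (a := 0)
        (b := 2 * Real.pi) (by positivity)
        (hh.continuous_iteratedDeriv j (by exact_mod_cast (by lia : j ≤ m + 1))).continuousOn
        (by simpa using (hper j 0).symm)
      rw [← iteratedDeriv_succ] at hc0
      have := abs_sub_le_integral_abs_iteratedDeriv (m - (j + 1)) hcd (hper (j + 1)) hx
        (Set.Ioo_subset_Icc_self hc)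
      have e : iteratedDeriv (m - (j + 1) + 1) (iteratedDeriv (j + 1) h) =
          iteratedDeriv (m + 1) h := by
        simp only [iteratedDeriv_eq_iterate, ← Function.iterate_add_apply]
        rw [show m - (j + 1) + 1 + (j + 1) = m + 1 by lia]
      rw [hc0, sub_zero, e, ← hQ] at this
      have h2 : (2 * Real.pi) ^ (m - (j + 1)) ≤ (2 * Real.pi) ^ m :=
        pow_le_pow_right₀ hL (by lia)
      nlinarith
  have h1 := sq_integral_abs_le hh.continuous
  have h2 := sq_integral_abs_le hk
  rw [← hP] at h1
  rw [← hQ] at h2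
  have h3 : (iteratedDeriv j h x) ^ 2 ≤ (P + (2 * Real.pi) ^ m * Q) ^ 2 := by
    rw [← sq_abs]; gcongr
  have hA : 0 ≤ ∫ t in (0:ℝ)..(2 * Real.pi), h t ^ 2 := integral_nonneg hle fun t _ => sq_nonneg _
  rw [HkNormSq]
  set A := ∫ t in (0:ℝ)..(2 * Real.pi), h t ^ 2
  set B := ∫ t in (0:ℝ)..(2 * Real.pi), iteratedDeriv (m + 1) h t ^ 2
  set T := (2 * Real.pi) ^ m
  have hT : 1 ≤ T ^ 2 := one_le_pow₀ hPow
  calc _ ≤ _ := h3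
    _ ≤ 2 * (P ^ 2 + T ^ 2 * Q ^ 2) := by nlinarith [sq_nonneg (P - T * Q)]
    _ ≤ 2 * (T ^ 2 * (2 * Real.pi * A) + T ^ 2 * (2 * Real.pi * B)) := by
        have : 0 ≤ 2 * Real.pi * A := by positivity
        have h5 : 1 * (2 * Real.pi * A) ≤ T ^ 2 * (2 * Real.pi * A) := by gcongr
        gcongr
        linarith
    _ = _ := by ring

/-! ### The Lipschitz estimate for one basis function, and summability -/

lemma HkNormSq_nonneg (k : ℕ) (h : ℝ → ℝ) : 0 ≤ HkNormSq k h := by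
  have hle : (0:ℝ) ≤ 2 * Real.pi := by positivity
  exact add_nonneg (integral_nonneg hle fun t _ => sq_nonneg _)
    (integral_nonneg hle fun t _ => sq_nonneg _)

lemma HkNormSq_const_mul (k : ℕ) (a : ℝ) (h : ℝ → ℝ) :
    HkNormSq k (fun θ => a * h θ) = a ^ 2 * HkNormSq k h := by
  simp only [HkNormSq, iteratedDeriv_const_mul_field, mul_pow, intervalIntegral.integral_const_mul]
  ring

lemma integral_cos_sub_sq_le (k : ℕ) {f g : ℝ → ℝ} (hf : Continuous f) (hg : Continuous g)
    (n : ℤ) (c : ℝ) :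
    ∫ θ in (0:ℝ)..(2 * Real.pi),
      (Real.cos (n * (θ + f θ) + c) - Real.cos (n * (θ + g θ) + c)) ^ 2 ≤
      (1 + |(n : ℝ)|) ^ (2 * k + 2) * ∫ θ in (0:ℝ)..(2 * Real.pi), (f θ - g θ) ^ 2 := by
  rw [← intervalIntegral.integral_const_mul]
  refine integral_mono_on (by positivity) (Continuous.intervalIntegrable (by fun_prop) _ _)
    (Continuous.intervalIntegrable (by fun_prop) _ _) fun θ _ => ?_
  have h1 := Real.abs_cos_sub_cos_le (n * (θ + f θ) + c) (n * (θ + g θ) + c)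
  have e : n * (θ + f θ) + c - (n * (θ + g θ) + c) = n * (f θ - g θ) := by ring
  rw [e] at h1
  have h2 := sq_le_sq.2 h1
  have hb : (n : ℝ) ^ 2 ≤ (1 + |(n : ℝ)|) ^ (2 * k + 2) := by
    rw [← sq_abs]
    calc |(n : ℝ)| ^ 2 ≤ (1 + |(n : ℝ)|) ^ 2 := by gcongr; linarith
      _ ≤ _ := pow_le_pow_right₀ (by linarith [abs_nonneg (n : ℝ)]) (by lia)
  rw [mul_pow] at h2
  exact h2.trans (mul_le_mul_of_nonneg_right hb (sq_nonneg _))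

lemma contDiff_id_add {k : ℕ} {f : ℝ → ℝ} (hf : ContDiff ℝ k f) (a : ℝ) :
    ContDiff ℝ k (fun x => a * (x + f x)) :=
  contDiff_const.mul (contDiff_id.add hf)

lemma abs_iteratedDeriv_id_add_le {k : ℕ} {f : ℝ → ℝ} (hf : ContDiff ℝ k f) (a : ℝ) {i : ℕ}
    (hi : 1 ≤ i) (hik : i ≤ k) (x : ℝ) :
    |iteratedDeriv i (fun x => a * (x + f x)) x| ≤ |a| * (1 + |iteratedDeriv i f x|) := by
  have hfi : ContDiff ℝ i f := hf.of_le (by exact_mod_cast hik)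
  rw [iteratedDeriv_const_mul_field,
    iteratedDeriv_fun_add (f := fun x => x) contDiff_id.contDiffAt hfi.contDiffAt, abs_mul]
  gcongr
  refine (abs_add_le _ _).trans ?_
  gcongr
  have := iteratedDeriv_id (𝕜 := ℝ) (n := i) (x := x)
  change |iteratedDeriv i id x| ≤ 1
  rw [this]
  split_ifs with h0
  · lia
  · simp
  · simp

/-- The `H^k` Lipschitz estimate for a single frequency `n`, with polynomial growth in `n`. -/
lemma exists_HkNormSq_cos_sub_le (k : ℕ) (R : ℝ) : ∃ A : ℝ, 0 ≤ A ∧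
    ∀ f g : ℝ → ℝ, ContDiff ℝ k f → ContDiff ℝ k g →
      (∀ x, f (x + 2 * Real.pi) = f x) → (∀ x, g (x + 2 * Real.pi) = g x) →
      HkNormSq k f ≤ R ^ 2 → HkNormSq k g ≤ R ^ 2 → ∀ (n : ℤ) (c : ℝ),
      HkNormSq k (fun θ => Real.cos (n * (θ + f θ) + c) - Real.cos (n * (θ + g θ) + c)) ≤
        A * ((1 + |(n : ℝ)|) ^ (2 * k + 2) * HkNormSq k (fun θ => f θ - g θ)) := by
  have hle : (0:ℝ) ≤ 2 * Real.pi := by positivity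
  rcases k with _ | m
  -- `k = 0` needs no Sobolev bound: `cos` is `1`-Lipschitz.
  · refine ⟨1, zero_le_one, ?_⟩
    intro f g hf hg _ _ _ _ n c
    have h := integral_cos_sub_sq_le 0 hf.continuous hg.continuous n c
    simp only [HkNormSq, iteratedDeriv_zero]
    linarith
  obtain ⟨S, hS0, hS⟩ := exists_sobolev m
  set M₀ := Real.sqrt (S * R ^ 2) with hM₀
  have hM₀0 : 0 ≤ M₀ := Real.sqrt_nonneg _
  set D := (2 ^ ((m + 1) * (m + 1)) * (1 + M₀) ^ (m + 1)) ^ 2 with hD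
  have hD0 : 0 ≤ D := by positivity
  refine ⟨1 + 3 * ((D + 2) * S * (2 * Real.pi) + 2 * S * R ^ 2 + 1), by positivity, ?_⟩
  intro f g hf hg hfp hgp hfR hgR n c
  have hh : ContDiff ℝ ((m + 1 : ℕ) : WithTop ℕ∞) (fun θ => f θ - g θ) := hf.sub hg
  have hhp : ∀ x, (fun θ => f θ - g θ) (x + 2 * Real.pi) = (fun θ => f θ - g θ) x := fun x => by
    simp only [hfp, hgp]
  set N := HkNormSq (m + 1) (fun θ => f θ - g θ) with hN
  have hN0 : 0 ≤ N := HkNormSq_nonneg _ _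
  set a := |(n : ℝ)| with ha
  have ha0 : 0 ≤ a := abs_nonneg _
  set b := 1 + a with hb
  have hb1 : 1 ≤ b := by linarith
  have hab : a ≤ b := by linarith
  set δ := Real.sqrt (S * N) with hδ
  have hδ0 : 0 ≤ δ := Real.sqrt_nonneg _
  have hδsq : δ ^ 2 = S * N := Real.sq_sqrt (by positivity)
  set F : ℝ → ℝ := fun θ => n * (θ + f θ) with hF
  set G : ℝ → ℝ := fun θ => n * (θ + g θ) with hG
  have hFc : ContDiff ℝ ((m + 1 : ℕ) : WithTop ℕ∞) F := contDiff_id_add hf _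
  have hGc : ContDiff ℝ ((m + 1 : ℕ) : WithTop ℕ∞) G := contDiff_id_add hg _
  have hFG : (fun x => F x - G x) = fun x => (n : ℝ) * (f x - g x) := by
    funext x; simp only [hF, hG]; ring
  have hFGd : ∀ i x, |iteratedDeriv i (fun x => F x - G x) x| =
      a * |iteratedDeriv i (fun x => f x - g x) x| := by
    intro i x
    rw [hFG, iteratedDeriv_const_mul_field, abs_mul]
  have hbd : ∀ u : ℝ → ℝ, ContDiff ℝ ((m + 1 : ℕ) : WithTop ℕ∞) u →
      (∀ x, u (x + 2 * Real.pi) = u x) → HkNormSq (m + 1) u ≤ R ^ 2 →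
      ∀ x ∈ Set.Icc 0 (2 * Real.pi), ∀ i, 1 ≤ i → i ≤ m →
        |iteratedDeriv i (fun θ => (n : ℝ) * (θ + u θ)) x| ≤ b * (1 + M₀) := by
    intro u hu hup huR x hx i hi him
    refine (abs_iteratedDeriv_id_add_le hu n hi (by lia) x).trans ?_
    have : |iteratedDeriv i u x| ≤ M₀ := by
      refine Real.abs_le_sqrt ((hS u hu hup i him x hx).trans ?_)
      gcongr
    gcongr
  -- The lower-order derivatives are already absorbed into `S * N` and `D`; only the derivatives
  -- of order `m + 1` of `f` and `f - g` remain, to be integrated.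
  have hpt : ∀ x ∈ Set.Icc 0 (2 * Real.pi),
      (iteratedDeriv (m + 1) (fun θ => Real.cos (F θ + c) - Real.cos (G θ + c)) x) ^ 2 ≤
      b ^ (2 * (m + 1) + 2) * (3 * ((D + 2) * (S * N) +
        2 * (S * N) * iteratedDeriv (m + 1) f x ^ 2 +
        iteratedDeriv (m + 1) (fun θ => f θ - g θ) x ^ 2)) := by
    intro x hx
    have h1 := abs_iteratedDeriv_cos_sub_top_le m hFc hGc c x (b * (1 + M₀)) (a * δ)
      (by nlinarith) (hbd f hf hfp hfR x hx) (hbd g hg hgp hgR x hx) (by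
        intro i hi
        rw [hFGd]
        gcongr
        exact Real.abs_le_sqrt (hS _ hh hhp i hi x hx))
    rw [hFGd] at h1
    have h2 := abs_iteratedDeriv_id_add_le hf n (by lia : 1 ≤ m + 1) le_rfl x
    set p := |iteratedDeriv (m + 1) f x| with hp
    set q := |iteratedDeriv (m + 1) (fun θ => f θ - g θ) x| with hq
    have hp0 : 0 ≤ p := abs_nonneg _
    have hq0 : 0 ≤ q := abs_nonneg _
    rw [← sq_abs (iteratedDeriv (m + 1) f x),
      ← sq_abs (iteratedDeriv (m + 1) (fun θ => f θ - g θ) x), ← hp, ← hq]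
    set E := 2 ^ ((m + 1) * (m + 1)) * (1 + M₀) ^ (m + 1) with hE
    have hE0 : 0 ≤ E := by positivity
    have hbm : b ≤ b ^ (m + 1) := le_self_pow₀ hb1 (by lia)
    have h3 : |iteratedDeriv (m + 1) (fun θ => Real.cos (F θ + c) - Real.cos (G θ + c)) x| ≤
        b ^ (m + 2) * (E * δ + δ * (1 + p) + q) := by
      refine h1.trans ?_
      calc _ ≤ 2 ^ ((m + 1) * (m + 1)) * (b * (1 + M₀)) ^ (m + 1) * (b * δ) +
            (b * δ * (b ^ (m + 1) * (1 + p)) + b ^ (m + 2) * q) := by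
            have h4 : |iteratedDeriv (m + 1) F x| ≤ b ^ (m + 1) * (1 + p) :=
              h2.trans (by gcongr; exact hab.trans hbm)
            have h5 : a ≤ b ^ (m + 2) := hab.trans (le_self_pow₀ hb1 (by lia))
            gcongr
        _ = _ := by rw [hE, mul_pow]; ring
    rw [← sq_abs]
    calc _ ≤ (b ^ (m + 2) * (E * δ + δ * (1 + p) + q)) ^ 2 := by gcongr
      _ = b ^ (2 * (m + 1) + 2) * (E * δ + δ * (1 + p) + q) ^ 2 := by ring
      _ ≤ b ^ (2 * (m + 1) + 2) * (3 * ((E * δ) ^ 2 + (δ * (1 + p)) ^ 2 + q ^ 2)) := by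
          gcongr
          nlinarith [sq_nonneg (E * δ - δ * (1 + p)), sq_nonneg (E * δ - q),
            sq_nonneg (δ * (1 + p) - q)]
      _ ≤ _ := by
          gcongr b ^ (2 * (m + 1) + 2) * (3 * (?_ + _))
          rw [mul_pow E δ, mul_pow δ (1 + p), hδsq]
          have : (1 + p) ^ 2 ≤ 2 + 2 * p ^ 2 := by nlinarith [sq_nonneg (1 - p)]
          have h6 := mul_le_mul_of_nonneg_left this (mul_nonneg hS0 hN0)
          rw [hD]
          linarith
  have hfk : Continuous (iteratedDeriv (m + 1) f) := hf.continuous_iteratedDeriv' _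
  have hhk : Continuous (iteratedDeriv (m + 1) (fun θ => f θ - g θ)) :=
    hh.continuous_iteratedDeriv' _
  have huk : Continuous
      (iteratedDeriv (m + 1) (fun θ => Real.cos (F θ + c) - Real.cos (G θ + c))) :=
    ((contDiff_cos_add hFc c).sub (contDiff_cos_add hGc c)).continuous_iteratedDeriv' _
  have hint := integral_mono_on (μ := volume) hle
    (Continuous.intervalIntegrable (by fun_prop) _ _)
    (Continuous.intervalIntegrable (by fun_prop) _ _) hpt
  rw [intervalIntegral.integral_const_mul, intervalIntegral.integral_const_mul,
    intervalIntegral.integral_add (Continuous.intervalIntegrable (by fun_prop) _ _)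
      (Continuous.intervalIntegrable (by fun_prop) _ _),
    intervalIntegral.integral_add (Continuous.intervalIntegrable (by fun_prop) _ _)
      (Continuous.intervalIntegrable (by fun_prop) _ _),
    intervalIntegral.integral_const, intervalIntegral.integral_const_mul,
    smul_eq_mul, sub_zero] at hint
  have h0 := integral_cos_sub_sq_le (m + 1) hf.continuous hg.continuous n c
  have hf2 : ∫ x in (0:ℝ)..(2 * Real.pi), iteratedDeriv (m + 1) f x ^ 2 ≤ R ^ 2 :=
    le_trans (le_add_of_nonneg_left (integral_nonneg hle fun t _ => sq_nonneg _)) hfR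
  have hh2 : ∫ x in (0:ℝ)..(2 * Real.pi), iteratedDeriv (m + 1) (fun θ => f θ - g θ) x ^ 2 ≤ N :=
    le_add_of_nonneg_left (integral_nonneg hle fun t _ => sq_nonneg _)
  have hh1 : ∫ x in (0:ℝ)..(2 * Real.pi), (f x - g x) ^ 2 ≤ N :=
    le_add_of_nonneg_right (integral_nonneg hle fun t _ => sq_nonneg _)
  have hB : 0 ≤ b ^ (2 * (m + 1) + 2) := by positivity
  have hSN : 0 ≤ 2 * (S * N) := by positivity
  calc _ ≤ b ^ (2 * (m + 1) + 2) * N + b ^ (2 * (m + 1) + 2) *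
        (3 * (2 * Real.pi * ((D + 2) * (S * N)) + 2 * (S * N) * R ^ 2 + N)) := by
        refine add_le_add (h0.trans (by gcongr)) (hint.trans (by gcongr))
    _ = _ := by ring

lemma summable_weight (k : ℕ) (lam : ℤ → ℝ) (hpos : ∀ n : ℤ, 0 < lam n)
    (hdecay : ∀ j : ℕ, Filter.Tendsto (fun n : ℤ => (|n| : ℝ) ^ j * lam n)
      Filter.cofinite (nhds 0)) :
    Summable (fun n : ℤ => lam n ^ 2 * (1 + |(n : ℝ)|) ^ (2 * k + 2)) := by
  refine summable_of_isBigO (Real.summable_one_div_int_pow.2 (one_lt_two)) ?_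
  refine Asymptotics.IsBigO.of_bound (2 ^ (2 * k + 2)) ?_
  have h1 := (hdecay (k + 2)).eventually (gt_mem_nhds (zero_lt_one))
  have h0 : ∀ᶠ n : ℤ in Filter.cofinite, n ≠ 0 := by
    simpa using (Set.finite_singleton (0 : ℤ)).compl_mem_cofinite
  filter_upwards [h1, h0] with n hn hn0
  have ha : (1 : ℝ) ≤ |(n : ℝ)| := by exact_mod_cast Int.one_le_abs hn0
  have hl := hpos n
  rw [Real.norm_of_nonneg (by positivity), Real.norm_of_nonneg (by positivity), ← sq_abs (n : ℝ)]
  set a := |(n : ℝ)|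
  have ha0 : 0 < a := by linarith
  rw [mul_one_div, le_div_iff₀ (by positivity)]
  calc _ ≤ lam n ^ 2 * (2 * a) ^ (2 * k + 2) * a ^ 2 := by gcongr; linarith
    _ = 2 ^ (2 * k + 2) * (a ^ (k + 2) * lam n) ^ 2 := by ring
    _ ≤ 2 ^ (2 * k + 2) * 1 := by
        gcongr
        exact pow_le_one₀ (by positivity) hn.le
    _ = _ := mul_one _

/-- Sines are phase-shifted cosines, so both kinds of basis functions are treated at once. -/
lemma eBasis_eq (lam : ℤ → ℝ) (n : ℤ) :
    ∃ c : ℝ, ∀ θ, eBasis lam n θ = lam n * Real.cos (n * θ + c) := by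
  by_cases hn : 0 ≤ n
  · exact ⟨0, fun θ => by simp [eBasis, hn]⟩
  · exact ⟨-(Real.pi / 2), fun θ => by
      rw [eBasis, if_neg hn, ← sub_eq_add_neg, Real.cos_sub_pi_div_two]⟩

/-- Proposition 2.8: `Φ : C^k → L²(H_λ, H^k)`, `Φ(f)g = g ∘ (id + f)`, is locally Lipschitz:
for every `R > 0` there is `C_R > 0` such that for `2π`-periodic `C^k` functions `f, g` with
`‖f‖_{H^k}, ‖g‖_{H^k} ≤ R` one has
`∑_{n∈ℤ} ‖ê_n∘(id+f) − ê_n∘(id+g)‖²_{H^k} ≤ C_R² ‖f − g‖²_{H^k}`. -/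
theorem Phi_locally_lipschitz (k : ℕ) (lam : ℤ → ℝ)
    (hpos : ∀ n : ℤ, 0 < lam n) (heven : ∀ n : ℤ, lam (-n) = lam n)
    (hdecay : ∀ j : ℕ, Filter.Tendsto (fun n : ℤ => (|n| : ℝ) ^ j * lam n)
      Filter.cofinite (nhds 0)) :
    ∀ R : ℝ, 0 < R → ∃ C : ℝ, 0 < C ∧
      ∀ f g : ℝ → ℝ, ContDiff ℝ (k : ℕ∞) f → ContDiff ℝ (k : ℕ∞) g →
        (∀ x : ℝ, f (x + 2 * Real.pi) = f x) → (∀ x : ℝ, g (x + 2 * Real.pi) = g x) →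
        Real.sqrt (HkNormSq k f) ≤ R → Real.sqrt (HkNormSq k g) ≤ R →
        Summable (fun n : ℤ =>
          HkNormSq k (fun θ : ℝ => eBasis lam n (θ + f θ) - eBasis lam n (θ + g θ))) ∧
        (∑' n : ℤ,
          HkNormSq k (fun θ : ℝ => eBasis lam n (θ + f θ) - eBasis lam n (θ + g θ))) ≤
          C ^ 2 * HkNormSq k (fun θ : ℝ => f θ - g θ) := by
  intro R hR
  obtain ⟨A, hA0, hA⟩ := exists_HkNormSq_cos_sub_le k R
  have hw := summable_weight k lam hpos hdecay
  set W := ∑' n : ℤ, lam n ^ 2 * (1 + |(n : ℝ)|) ^ (2 * k + 2) with hW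
  have hW0 : 0 ≤ W := tsum_nonneg fun n => by positivity
  refine ⟨A * W + 1, by positivity, ?_⟩
  intro f g hf hg hfp hgp hfR hgR
  have hf' : ContDiff ℝ k f := by exact_mod_cast hf
  have hg' : ContDiff ℝ k g := by exact_mod_cast hg
  set N := HkNormSq k (fun θ : ℝ => f θ - g θ) with hN
  have hN0 : 0 ≤ N := HkNormSq_nonneg _ _
  have hb : ∀ n : ℤ,
      HkNormSq k (fun θ : ℝ => eBasis lam n (θ + f θ) - eBasis lam n (θ + g θ)) ≤
        lam n ^ 2 * (1 + |(n : ℝ)|) ^ (2 * k + 2) * (A * N) := by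
    intro n
    obtain ⟨c, hc⟩ := eBasis_eq lam n
    simp only [hc, ← mul_sub]
    rw [HkNormSq_const_mul]
    have := hA f g hf' hg' hfp hgp ((Real.sqrt_le_left hR.le).1 hfR)
      ((Real.sqrt_le_left hR.le).1 hgR) n c
    calc _ ≤ lam n ^ 2 * (A * ((1 + |(n : ℝ)|) ^ (2 * k + 2) * N)) := by gcongr
      _ = _ := by ring
  have hs := Summable.of_nonneg_of_le (fun n => HkNormSq_nonneg _ _) hb (hw.mul_right (A * N))
  refine ⟨hs, (hs.tsum_le_tsum hb (hw.mul_right _)).trans ?_⟩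
  rw [tsum_mul_right, ← hW]
  have hAW : 0 ≤ A * W := by positivity
  calc W * (A * N) = A * W * N := by ring
    _ ≤ (A * W + 1) ^ 2 * N := by
        gcongr
        nlinarith
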